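/- Let λ ∈ ℝ and let F : ℝ² → ℝ be defined by F(x) = x₂ · ( arctan|x| / |x|³ − 1/(|x|²(|x|² + 1)) ) for x ≠ 0 and F(0) = 0. If the function λ·F is harmonic on ℝ², i.e. Δ(λF)(x) = 0 for every x ∈ ℝ², then λ = 0. -/

import Mathlib

noncomputable section

/-!
For `f y = ⟪v, y⟫ g(‖y‖)` on an `n`-dimensional space one has, away from the origin,
`Δf = ⟪v, ·⟫ (g'' + (n + 1) g' / r) = ⟪v, ·⟫ (r ^ (n + 1) g')' / r ^ (n + 1)`. When `n = 2` and
`g` is the radial factor of `F`, this equals `⟪v, ·⟫ h(r) / r ^ 5` with `h(0) = 0` and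
`h'(r) = 16 r ^ 4 (r ^ 2 - 2) / (1 + r ^ 2) ^ 4`. Hence `h < 0` on `(0, √2]`, so `ΔF` does not
vanish at any point with `0 < |x| ≤ √2` off the line `x₂ = 0`.
-/

open Filter Topology Set
open scoped InnerProductSpace

section Radial

variable {E : Type*} [NormedAddCommGroup E] [InnerProductSpace ℝ E]

theorem hasFDerivAt_norm {x : E} (hx : x ≠ 0) :
    HasFDerivAt (fun y : E ↦ ‖y‖) (‖x‖⁻¹ • innerSL ℝ x) x := by
  have h := (hasStrictFDerivAt_norm_sq x).hasFDerivAt.sqrt (pow_ne_zero 2 (norm_ne_zero_iff.2 hx))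
  simp only [Real.sqrt_sq (norm_nonneg _)] at h
  refine h.congr_fderiv ?_
  ext u
  simp only [one_div, mul_inv_rev, smul_apply, coe_innerSL_apply, nsmul_eq_mul, Nat.cast_ofNat,
    smul_eq_mul]
  ring

theorem hasFDerivAt_inner_mul_comp_norm {g : ℝ → ℝ} {g' : ℝ} (v : E) {x : E} (hx : x ≠ 0)
    (hg : HasDerivAt g g' ‖x‖) :
    HasFDerivAt (fun y ↦ ⟪v, y⟫_ℝ * g ‖y‖)
      (g ‖x‖ • innerSL ℝ v + (⟪v, x⟫_ℝ * (g' / ‖x‖)) • innerSL ℝ x) x := by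
  have h := (innerSL ℝ v).hasFDerivAt.mul (hg.comp_hasFDerivAt x (hasFDerivAt_norm hx))
  refine h.congr_fderiv ?_
  ext u
  simp only [coe_innerSL_apply, Function.comp_apply, add_apply, smul_apply, smul_eq_mul]
  ring

theorem fderiv_fderiv_inner_mul_comp_norm {g g' : ℝ → ℝ} {g'' : ℝ} (v u : E) {x : E} (hx : x ≠ 0)
    (hg : ∀ᶠ r in 𝓝 ‖x‖, HasDerivAt g (g' r) r) (hg' : HasDerivAt g' g'' ‖x‖) :
    fderiv ℝ (fun y ↦ fderiv ℝ (fun z ↦ ⟪v, z⟫_ℝ * g ‖z‖) y u) x u =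
      g' ‖x‖ / ‖x‖ * (2 * (⟪v, u⟫_ℝ * ⟪u, x⟫_ℝ) + ⟪v, x⟫_ℝ * ‖u‖ ^ 2) +
        ⟪v, x⟫_ℝ * (g'' - g' ‖x‖ / ‖x‖) / ‖x‖ ^ 2 * ⟪u, x⟫_ℝ ^ 2 := by
  have hr : ‖x‖ ≠ 0 := norm_ne_zero_iff.2 hx
  have hfirst : (fun y ↦ fderiv ℝ (fun z ↦ ⟪v, z⟫_ℝ * g ‖z‖) y u) =ᶠ[𝓝 x]
      fun y ↦ g ‖y‖ * ⟪v, u⟫_ℝ + ⟪v, y⟫_ℝ * (g' ‖y‖ / ‖y‖) * ⟪u, y⟫_ℝ := by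
    filter_upwards [continuous_norm.continuousAt.eventually hg, eventually_ne_nhds hx] with y hgy hy
    simp [(hasFDerivAt_inner_mul_comp_norm v hy hgy).fderiv, real_inner_comm]
  have hquot : HasDerivAt (fun r ↦ g' r / r) ((g'' * ‖x‖ - g' ‖x‖ * 1) / ‖x‖ ^ 2) ‖x‖ :=
    hg'.fun_div (hasDerivAt_id _) hr
  have hsecond :=
    ((hg.self_of_nhds.comp_hasFDerivAt x (hasFDerivAt_norm hx)).mul_const ⟪v, u⟫_ℝ).add
      ((hasFDerivAt_inner_mul_comp_norm v hx hquot).mul (innerSL ℝ u).hasFDerivAt)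
  rw [hfirst.fderiv_eq]
  refine (congrArg (· u) hsecond.fderiv).trans ?_
  simp only [coe_innerSL_apply, mul_one, smul_add, add_apply, smul_apply, real_inner_comm,
    smul_eq_mul, real_inner_self_eq_norm_sq]
  field_simp
  ring

theorem sum_fderiv_fderiv_inner_mul_comp_norm {ι : Type*} [Fintype ι] (b : OrthonormalBasis ι ℝ E)
    {g g' : ℝ → ℝ} {g'' : ℝ} (v : E) {x : E} (hx : x ≠ 0)
    (hg : ∀ᶠ r in 𝓝 ‖x‖, HasDerivAt g (g' r) r) (hg' : HasDerivAt g' g'' ‖x‖) :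
    ∑ i, fderiv ℝ (fun y ↦ fderiv ℝ (fun z ↦ ⟪v, z⟫_ℝ * g ‖z‖) y (b i)) x (b i) =
      ⟪v, x⟫_ℝ * (g'' + (Fintype.card ι + 1) * (g' ‖x‖ / ‖x‖)) := by
  have hr : ‖x‖ ≠ 0 := norm_ne_zero_iff.2 hx
  simp only [fderiv_fderiv_inner_mul_comp_norm v _ hx hg hg', b.norm_eq_one, one_pow, mul_one,
    Finset.sum_add_distrib, ← Finset.mul_sum, b.sum_inner_mul_inner, b.sum_sq_inner_right,
    Finset.sum_const, Finset.card_univ, nsmul_eq_mul]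
  field_simp
  ring

end Radial

theorem fderiv_fderiv_apply_congr_nhds {𝕜 E F : Type*} [NontriviallyNormedField 𝕜]
    [NormedAddCommGroup E] [NormedSpace 𝕜 E] [NormedAddCommGroup F] [NormedSpace 𝕜 F]
    {f₁ f₂ : E → F} {x : E} (h : f₁ =ᶠ[𝓝 x] f₂) (u w : E) :
    fderiv 𝕜 (fun y ↦ fderiv 𝕜 f₁ y u) x w = fderiv 𝕜 (fun y ↦ fderiv 𝕜 f₂ y u) x w := by
  have hfirst : (fun y ↦ fderiv 𝕜 f₁ y u) =ᶠ[𝓝 x] fun y ↦ fderiv 𝕜 f₂ y u :=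
    h.fderiv.fun_comp (· u)
  rw [hfirst.fderiv_eq]

/-- The radial factor `g` of `F`, so that `F x = x₂ g(|x|)` for `x ≠ 0`. -/
def radialFactor (r : ℝ) : ℝ :=
  Real.arctan r / r ^ 3 - 1 / (r ^ 2 * (r ^ 2 + 1))

/-- The flux `r ^ 3 g'(r)` of the radial factor `g`. In the plane, the Laplacian of `x₂ g(|x|)` is
`x₂ / r ^ 3` times the derivative of this function. -/
def radialFlux (r : ℝ) : ℝ :=
  (3 + 5 * r ^ 2) / (1 + r ^ 2) ^ 2 - 3 * Real.arctan r / r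

/-- The function `h` for which the Laplacian of `x₂ g(|x|)` is `x₂ h(r) / r ^ 5`, where `g` is
`radialFactor` and `r = |x|`. It is written without negative powers of `r` so that it is
differentiable at `0`. -/
def laplacianNumerator (r : ℝ) : ℝ :=
  3 * Real.arctan r - (3 * r + 8 * r ^ 3 + 13 * r ^ 5) / (1 + r ^ 2) ^ 3

theorem hasDerivAt_radialFactor {r : ℝ} (hr : r ≠ 0) :
    HasDerivAt radialFactor (radialFlux r / r ^ 3) r := by
  have harctan := (Real.hasDerivAt_arctan r).fun_div (hasDerivAt_pow 3 r) (pow_ne_zero 3 hr)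
  have hrational := (hasDerivAt_const r (1 : ℝ)).fun_div
    ((hasDerivAt_pow 2 r).fun_mul ((hasDerivAt_pow 2 r).add_const 1)) (by positivity)
  refine (harctan.fun_sub hrational).congr_deriv ?_
  unfold radialFlux
  field_simp
  push_cast
  ring

theorem hasDerivAt_radialFlux {r : ℝ} (hr : r ≠ 0) :
    HasDerivAt radialFlux (laplacianNumerator r / r ^ 2) r := by
  have hrational := (((hasDerivAt_pow 2 r).const_mul 5).const_add 3).fun_div
    (((hasDerivAt_pow 2 r).const_add 1).fun_pow 2) (by positivity)
  have harctan := ((Real.hasDerivAt_arctan r).const_mul 3).fun_div (hasDerivAt_id r) hr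
  refine (hrational.fun_sub harctan).congr_deriv ?_
  unfold laplacianNumerator
  simp only [id]
  field_simp
  push_cast
  ring

theorem hasDerivAt_radialFlux_div_cube {r : ℝ} (hr : r ≠ 0) :
    HasDerivAt (fun s ↦ radialFlux s / s ^ 3)
      (laplacianNumerator r / r ^ 5 - 3 * radialFlux r / r ^ 4) r := by
  refine ((hasDerivAt_radialFlux hr).fun_div (hasDerivAt_pow 3 r) (pow_ne_zero 3 hr)).congr_deriv ?_
  field_simp
  push_cast
  ring

theorem hasDerivAt_laplacianNumerator (r : ℝ) :
    HasDerivAt laplacianNumerator (16 * r ^ 4 * (r ^ 2 - 2) / (1 + r ^ 2) ^ 4) r := by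
  have hpoly := (((hasDerivAt_id r).const_mul 3).fun_add ((hasDerivAt_pow 3 r).const_mul 8)).fun_add
    ((hasDerivAt_pow 5 r).const_mul 13)
  have hrational := hpoly.fun_div (((hasDerivAt_pow 2 r).const_add 1).fun_pow 3) (by positivity)
  refine (((Real.hasDerivAt_arctan r).const_mul 3).fun_sub hrational).congr_deriv ?_
  simp only [id]
  field_simp
  push_cast
  ring

theorem strictAntiOn_laplacianNumerator : StrictAntiOn laplacianNumerator (Icc 0 √2) := by
  refine strictAntiOn_of_deriv_neg (convex_Icc 0 √2)
    (fun r _ ↦ (hasDerivAt_laplacianNumerator r).continuousAt.continuousWithinAt) fun r hr ↦ ?_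
  rw [interior_Icc] at hr
  have hsq : r ^ 2 < 2 := (Real.lt_sqrt hr.1.le).1 hr.2
  rw [(hasDerivAt_laplacianNumerator r).deriv]
  exact div_neg_of_neg_of_pos
    (mul_neg_of_pos_of_neg (mul_pos (by norm_num) (pow_pos hr.1 4)) (sub_neg.2 hsq)) (by positivity)

theorem laplacianNumerator_neg {r : ℝ} (hr : 0 < r) (hr2 : r ≤ √2) : laplacianNumerator r < 0 := by
  simpa [laplacianNumerator] using
    strictAntiOn_laplacianNumerator ⟨le_rfl, Real.sqrt_nonneg 2⟩ ⟨hr.le, hr2⟩ hr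

theorem sum_fderiv_fderiv_inner_mul_radialFactor (v : EuclideanSpace ℝ (Fin 2))
    {x : EuclideanSpace ℝ (Fin 2)} (hx : x ≠ 0) :
    ∑ i : Fin 2, fderiv ℝ (fun y ↦ fderiv ℝ (fun z ↦ ⟪v, z⟫_ℝ * radialFactor ‖z‖) y
        (EuclideanSpace.single i 1)) x (EuclideanSpace.single i 1) =
      ⟪v, x⟫_ℝ * (laplacianNumerator ‖x‖ / ‖x‖ ^ 5) := by
  have hr : ‖x‖ ≠ 0 := norm_ne_zero_iff.2 hx
  have hfactor : ∀ᶠ r in 𝓝 ‖x‖, HasDerivAt radialFactor (radialFlux r / r ^ 3) r :=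
    (eventually_ne_nhds hr).mono fun r ↦ hasDerivAt_radialFactor
  have h := sum_fderiv_fderiv_inner_mul_comp_norm (EuclideanSpace.basisFun (Fin 2) ℝ) v hx hfactor
    (hasDerivAt_radialFlux_div_cube hr)
  simp only [EuclideanSpace.basisFun_apply, Fintype.card_fin] at h
  rw [h]
  field_simp
  push_cast
  ring

theorem harmonic_F_implies_zero_general (lam : ℝ) (F : EuclideanSpace ℝ (Fin 2) → ℝ)
    (hF : ∀ x : EuclideanSpace ℝ (Fin 2), x ≠ 0 →
      F x = x 1 * (Real.arctan ‖x‖ / ‖x‖ ^ 3 - 1 / (‖x‖ ^ 2 * (‖x‖ ^ 2 + 1))))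
    (x : EuclideanSpace ℝ (Fin 2)) (hx : x 1 ≠ 0) (hx2 : ‖x‖ ≤ √2)
    (hharm : (∑ i : Fin 2, fderiv ℝ (fun y : EuclideanSpace ℝ (Fin 2) =>
          fderiv ℝ (fun z => lam * F z) y (EuclideanSpace.single i 1))
        x (EuclideanSpace.single i 1)) = 0) :
    lam = 0 := by
  have hx0 : x ≠ 0 := fun h ↦ hx (by simp [h])
  have hr : 0 < ‖x‖ := norm_pos_iff.2 hx0
  have hlocal : (fun z ↦ lam * F z) =ᶠ[𝓝 x]
      fun z ↦ ⟪EuclideanSpace.single 1 lam, z⟫_ℝ * radialFactor ‖z‖ := by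
    filter_upwards [eventually_ne_nhds hx0] with z hz
    simp [hF z hz, radialFactor, EuclideanSpace.inner_single_left, mul_assoc]
  have hzero : lam * x 1 * (laplacianNumerator ‖x‖ / ‖x‖ ^ 5) = 0 := by
    simp_rw [fderiv_fderiv_apply_congr_nhds hlocal] at hharm
    rwa [sum_fderiv_fderiv_inner_mul_radialFactor _ hx0, EuclideanSpace.inner_single_left,
      conj_trivial] at hharm
  have hfactor : laplacianNumerator ‖x‖ / ‖x‖ ^ 5 ≠ 0 :=
    div_ne_zero (laplacianNumerator_neg hr hx2).ne (pow_pos hr 5).ne'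
  simpa [hx, hfactor] using hzero

theorem harmonic_F_implies_zero (lam : ℝ)
    (F : EuclideanSpace ℝ (Fin 2) → ℝ)
    (hF0 : F 0 = 0)
    (hF : ∀ x : EuclideanSpace ℝ (Fin 2), x ≠ 0 →
      F x = x 1 * (Real.arctan ‖x‖ / ‖x‖ ^ 3 - 1 / (‖x‖ ^ 2 * (‖x‖ ^ 2 + 1))))
    (hharm : ∀ x : EuclideanSpace ℝ (Fin 2),
      (∑ i : Fin 2, fderiv ℝ (fun y : EuclideanSpace ℝ (Fin 2) =>
          fderiv ℝ (fun z => lam * F z) y (EuclideanSpace.single i 1))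
        x (EuclideanSpace.single i 1)) = 0) :
    lam = 0 :=
  harmonic_F_implies_zero_general lam F hF (EuclideanSpace.single 1 1) (by simp) (by simp)
    (hharm _)
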